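/- Let x be a uniformly recurrent sequence over a finite alphabet A, and let u and v be nonempty prefixes of x with u a prefix of v. Then there is a unique monoid morphism Θ : R_{x,v}* → R_{x,u}* satisfying Θ_{x,u} ∘ Θ = Θ_{x,v}. -/

import Mathlib

/-!
Existence: since `u` is a prefix of `v`, every occurrence of `v` in `x` is an occurrence of `u`.
A return word to `v` is the factor of `x` between two occurrences of `v`, so cutting it at the
occurrences of `u` that it meets (`factorAt_occSeq`) writes it as a concatenation of return
words to `u`.

Uniqueness: the return words to `u` form a code (`flatten_injective`). If `r` is a return word to
`u`, then `u` occurs in `r ++ u` at position `0` and at position `r.length`, and nowhere in between.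
Hence, for a nonempty concatenation `W` of return words, `u` is a prefix of `W ++ u`, and the first
factor of `W` ends at the first position `> 0` where `u` occurs in `W ++ u`; the factorization can
thus be read off from `W`. As `Θ_{x,u}` is injective on letters (`thetaLetter_injOn`), it is
injective on words over `R_{x,u}`.
-/

namespace Rauzy

variable {A B Γ : Type*}

/-- The factor `x_[i, i+n)` of length `n` of the sequence `x`, starting at position `i`. -/
def factorAt (x : ℕ → A) (i n : ℕ) : List A :=
  (List.range n).map fun k => x (i + k)

/-- The word `w` occurs in the sequence `x` at position `i`. -/
def OccursAt (x : ℕ → A) (w : List A) (i : ℕ) : Prop :=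
  factorAt x i w.length = w

/-- The word `w` is a factor of the sequence `x`. -/
def IsFactor (x : ℕ → A) (w : List A) : Prop :=
  ∃ i, OccursAt x w i

/-- The word `w` is a prefix of the sequence `x`. -/
def IsPrefixSeq (x : ℕ → A) (w : List A) : Prop :=
  OccursAt x w 0

/-- The sequence `x` is uniformly recurrent: every factor occurs with bounded gaps. -/
def UniformlyRecurrent (x : ℕ → A) : Prop :=
  ∀ w : List A, IsFactor x w → ∃ N, ∀ i, ∃ j, i ≤ j ∧ j < i + N ∧ OccursAt x w j

/-- `i < j` are two successive occurrences of `u` in `x`. -/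
def SuccessiveOccs (x : ℕ → A) (u : List A) (i j : ℕ) : Prop :=
  i < j ∧ OccursAt x u i ∧ OccursAt x u j ∧ ∀ k, i < k → k < j → ¬ OccursAt x u k

/-- The word `w` is a return word to `u` in `x`. -/
def IsReturnWord (x : ℕ → A) (u w : List A) : Prop :=
  ∃ i j, SuccessiveOccs x u i j ∧ w = factorAt x i (j - i)

/-- The set `ℛ_{x,u}` of return words to `u` in `x`. -/
def returnWords (x : ℕ → A) (u : List A) : Set (List A) :=
  {w | IsReturnWord x u w}

/-- The next occurrence of `u` in `x` strictly after position `i`. -/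
noncomputable def nextOcc (x : ℕ → A) (u : List A) (i : ℕ) : ℕ :=
  sInf {j | i < j ∧ OccursAt x u j}

/-- The increasing enumeration of the occurrences of the prefix `u` in `x`
(position `0` is an occurrence since `u` is a prefix). -/
noncomputable def occSeq (x : ℕ → A) (u : List A) : ℕ → ℕ
  | 0 => 0
  | n + 1 => nextOcc x u (occSeq x u n)

/-- The `n`-th return word `mₙ` in the decomposition `x = m₀m₁m₂⋯` of `x`
into return words to the prefix `u`. -/
noncomputable def retWord (x : ℕ → A) (u : List A) (n : ℕ) : List A :=
  factorAt x (occSeq x u n) (occSeq x u (n + 1) - occSeq x u n)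

/-- The first index `n` such that `mₙ = w` in the decomposition of `x` into
return words to `u`. -/
noncomputable def firstIdx (x : ℕ → A) (u w : List A) : ℕ :=
  sInf {n | retWord x u n = w}

open Classical in
/-- The derived sequence `D_u(x)` of `x` on the prefix `u`, with the return words
labelled `0, 1, 2, …` in the order of their first appearance in the decomposition
`x = m₀m₁m₂⋯` : the label of `mₙ` is the number of distinct return words appearing
strictly before the first occurrence of `mₙ`. -/
noncomputable def derivedSeq (x : ℕ → A) (u : List A) (n : ℕ) : ℕ :=
  ((Finset.range (firstIdx x u (retWord x u n))).image (retWord x u)).card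

/-- The alphabet `R_{x,u} = {0, …, #ℛ_{x,u} - 1} ⊆ ℕ` of the derived sequence. -/
def derivedAlphabet (x : ℕ → A) (u : List A) : Set ℕ :=
  Set.range (derivedSeq x u)

/-- The morphism `Θ_{x,u}` on letters: the return word labelled `k`. -/
noncomputable def thetaLetter (x : ℕ → A) (u : List A) (k : ℕ) : List A :=
  retWord x u (sInf {n | derivedSeq x u n = k})

/-- The canonical extension of a letter-to-word map to a monoid morphism on words. -/
def apply (f : A → List B) (w : List A) : List B :=
  (w.map f).flatten

/-- The morphism `Θ_{x,u} : R_{x,u}* → A*` on words. -/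
noncomputable def theta (x : ℕ → A) (u : List A) (l : List ℕ) : List A :=
  apply (thetaLetter x u) l

/-- `y = f(x)` for an infinite sequence `x`: the image under `f` of every prefix
of `x` is a prefix of `y`. -/
def SeqImage (f : A → List B) (x : ℕ → A) (y : ℕ → B) : Prop :=
  ∀ n, IsPrefixSeq y (apply f (factorAt x 0 n))

/-- The iterate `σⁿ` of a substitution, on letters. -/
def substIter (σ : A → List A) : ℕ → A → List A
  | 0 => fun a => [a]
  | n + 1 => fun a => apply σ (substIter σ n a)

/-- `σ` is prolongable on the letter `a`: `σ(a) = a·w` with `w` nonempty, and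
`|σⁿ(a)| → ∞`. -/
def Prolongable (σ : A → List A) (a : A) : Prop :=
  (∃ w : List A, w ≠ [] ∧ σ a = a :: w) ∧
    Filter.Tendsto (fun n => (substIter σ n a).length) Filter.atTop Filter.atTop

/-- The incidence matrix of a substitution: entry `(i, j)` is the number of
occurrences of the letter `i` in `σ(j)`. -/
def incMatrix [Fintype A] [DecidableEq A] (σ : A → List A) : Matrix A A ℕ :=
  Matrix.of fun i j => (σ j).count i

/-- A substitution is primitive if some power of its incidence matrix has all
entries strictly positive. -/
def Primitive [Fintype A] [DecidableEq A] (σ : A → List A) : Prop :=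
  ∃ k, 0 < k ∧ ∀ i j, 0 < (incMatrix σ ^ k) i j

/-- The sequence `x` is (purely) periodic. -/
def IsPeriodic (x : ℕ → A) : Prop :=
  ∃ p, 0 < p ∧ ∀ n, x (n + p) = x n

/-- The sequence `x` is ultimately periodic. -/
def IsUltimatelyPeriodic (x : ℕ → A) : Prop :=
  ∃ N p, 0 < p ∧ ∀ n, N ≤ n → x (n + p) = x n

/-- `|σ| = max_{a ∈ A} |σ(a)|`. -/
def mSize [Fintype A] (σ : A → List A) : ℕ :=
  Finset.univ.sup fun a => (σ a).length

/-- `min_{a ∈ A} |σ(a)|`. -/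
noncomputable def minSize [Fintype A] [Nonempty A] (σ : A → List A) : ℕ :=
  Finset.univ.inf' Finset.univ_nonempty fun a => (σ a).length

/-- `R_σ`: the maximal difference between two successive occurrences of a word of
length 2 in any fixed point of `σ`. -/
noncomputable def Rconst (σ : A → List A) : ℕ :=
  sSup {r | ∃ x : ℕ → A, SeqImage σ x x ∧
    ∃ w i j, w.length = 2 ∧ SuccessiveOccs x w i j ∧ r = j - i}

/-- `Q_σ = max( max_{0 ≤ n ≤ (d−1)d^d + 1} |σⁿ| / min_{a∈A} |σⁿ(a)| , |σ| )`. -/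
noncomputable def Qconst [Fintype A] [Nonempty A] (σ : A → List A) : ℝ :=
  max
    ((Finset.range ((Fintype.card A - 1) * Fintype.card A ^ Fintype.card A + 2)).sup'
      (Finset.nonempty_range_iff.mpr (by omega))
      fun n => (mSize (substIter σ n) : ℝ) / (minSize (substIter σ n) : ℝ))
    (mSize σ : ℝ)

/-- `K_σ = Q_σ · R_σ · |σ|`. -/
noncomputable def Kconst [Fintype A] [Nonempty A] (σ : A → List A) : ℝ :=
  Qconst σ * Rconst σ * mSize σ

/-- The index `m` such that `occSeq x u m = L`, i.e. the number of complete return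
words to `u` composing the prefix of length `L` of `x`. -/
noncomputable def posIdx (x : ℕ → A) (u : List A) (L : ℕ) : ℕ :=
  sInf {m | occSeq x u m = L}

/-- The return substitution `σ_u : R_{x,u}* → R_{x,u}*`, on letters: it is the unique
substitution satisfying `Θ_{x,u} ∘ σ_u = σ ∘ Θ_{x,u}`. -/
noncomputable def returnSubst (σ : A → List A) (x : ℕ → A) (u : List A) (k : ℕ) : List ℕ :=
  let n := sInf {n | derivedSeq x u n = k}
  let p := posIdx x u (apply σ (factorAt x 0 (occSeq x u n))).length
  let q := posIdx x u (apply σ (factorAt x 0 (occSeq x u (n + 1)))).length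
  (List.range (q - p)).map fun t => derivedSeq x u (p + t)

/-- For a coding `φ`, the morphism `λ_u : R_{x,u}* → R_{φ(x),φ(u)}*`, on letters:
it is the unique morphism satisfying `φ ∘ Θ_{x,u} = Θ_{φ(x),φ(u)} ∘ λ_u`. -/
noncomputable def lambdaMorph (φ : A → B) (x : ℕ → A) (u : List A) (k : ℕ) : List ℕ :=
  let n := sInf {n | derivedSeq x u n = k}
  let p := posIdx (fun i => φ (x i)) (u.map φ) (occSeq x u n)
  let q := posIdx (fun i => φ (x i)) (u.map φ) (occSeq x u (n + 1))
  (List.range (q - p)).map fun t => derivedSeq (fun i => φ (x i)) (u.map φ) (p + t)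

/-- The Parikh vector (abelianization) of a word. -/
def parikh [DecidableEq A] (w : List A) : A → ℤ :=
  fun b => (w.count b : ℤ)


/-! ### Factors and occurrences -/

lemma length_factorAt (x : ℕ → A) (i n : ℕ) : (factorAt x i n).length = n := by
  simp [factorAt]

lemma factorAt_add (x : ℕ → A) (i m n : ℕ) :
    factorAt x i (m + n) = factorAt x i m ++ factorAt x (i + m) n := by
  simp [factorAt, List.range_add, add_assoc]

lemma occursAt_iff_prefix (x : ℕ → A) (u : List A) (i n : ℕ) (h : u.length ≤ n) :
    OccursAt x u i ↔ u <+: factorAt x i n := by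
  obtain ⟨d, rfl⟩ := Nat.exists_eq_add_of_le h
  rw [factorAt_add, OccursAt]
  constructor
  · intro hu
    rw [hu]
    exact List.prefix_append _ _
  · intro hu
    have h1 := List.prefix_of_prefix_length_le hu (List.prefix_append _ _)
      (length_factorAt x i u.length).ge
    exact (h1.eq_of_length (length_factorAt x i u.length).symm).symm

lemma OccursAt.of_prefix {x : ℕ → A} {u v : List A} {i : ℕ} (h : OccursAt x v i)
    (huv : u <+: v) : OccursAt x u i := by
  rw [occursAt_iff_prefix x u i v.length huv.length_le, h]
  exact huv

lemma exists_occ_gt {x : ℕ → A} {u : List A} (hrec : UniformlyRecurrent x)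
    (hpu : IsPrefixSeq x u) (i : ℕ) : ∃ j, i < j ∧ OccursAt x u j := by
  obtain ⟨N, hN⟩ := hrec u ⟨0, hpu⟩
  obtain ⟨j, hj, -, hoc⟩ := hN (i + 1)
  exact ⟨j, hj, hoc⟩

section Enumeration

variable {x : ℕ → A} {u : List A}

lemma successiveOccs_occSeq (hrec : UniformlyRecurrent x) (hpu : IsPrefixSeq x u) (n : ℕ) :
    SuccessiveOccs x u (occSeq x u n) (occSeq x u (n + 1)) := by
  have key : ∀ m, occSeq x u m < occSeq x u (m + 1) ∧ OccursAt x u (occSeq x u (m + 1)) :=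
    fun m => Nat.sInf_mem (exists_occ_gt hrec hpu (occSeq x u m))
  refine ⟨(key n).1, ?_, (key n).2, fun k hk hk' hoc => ?_⟩
  · cases n with
    | zero => exact hpu
    | succ m => exact (key m).2
  · exact Nat.notMem_of_lt_sInf hk' ⟨hk, hoc⟩

lemma occSeq_strictMono (hrec : UniformlyRecurrent x) (hpu : IsPrefixSeq x u) :
    StrictMono (occSeq x u) :=
  strictMono_nat_of_lt_succ fun n => (successiveOccs_occSeq hrec hpu n).1

lemma exists_occSeq_eq (hrec : UniformlyRecurrent x) (hpu : IsPrefixSeq x u) {i : ℕ}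
    (hi : OccursAt x u i) : ∃ n, occSeq x u n = i := by
  classical
  have hmono := occSeq_strictMono hrec hpu
  have hex : ∃ n, i < occSeq x u (n + 1) := ⟨i, hmono.le_apply⟩
  have hlt := Nat.find_spec hex
  refine ⟨Nat.find hex, ?_⟩
  have hle : occSeq x u (Nat.find hex) ≤ i := by
    rcases hn : Nat.find hex with _ | m
    · exact Nat.zero_le _
    · exact not_lt.mp (Nat.find_min hex (m := m) (by omega))
  by_contra hne
  exact (successiveOccs_occSeq hrec hpu _).2.2.2 i (lt_of_le_of_ne hle hne) hlt hi

/-- The factor of `x` between two occurrences of `u` is the concatenation of the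
return words to `u` that lie between them. -/
lemma factorAt_occSeq (hrec : UniformlyRecurrent x) (hpu : IsPrefixSeq x u) (p t : ℕ) :
    factorAt x (occSeq x u p) (occSeq x u (p + t) - occSeq x u p) =
      ((List.range t).map fun s => retWord x u (p + s)).flatten := by
  have hmono := (occSeq_strictMono hrec hpu).monotone
  induction t with
  | zero => simp [factorAt]
  | succ t ih =>
    have h1 : occSeq x u p ≤ occSeq x u (p + t) := hmono (by omega)
    have h2 : occSeq x u (p + t) ≤ occSeq x u (p + t + 1) := hmono (by omega)
    have h3 : occSeq x u (p + (t + 1)) - occSeq x u p =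
        (occSeq x u (p + t) - occSeq x u p) +
          (occSeq x u (p + t + 1) - occSeq x u (p + t)) := by
      rw [← add_assoc]; omega
    rw [h3, factorAt_add, ih, Nat.add_sub_cancel' h1, List.range_succ]
    simp [retWord]

/-! ### Labels of return words -/

lemma retWord_firstIdx (n : ℕ) : retWord x u (firstIdx x u (retWord x u n)) = retWord x u n :=
  Nat.sInf_mem (s := {m | retWord x u m = retWord x u n}) ⟨n, rfl⟩

lemma derivedSeq_lt {m n : ℕ}
    (h : firstIdx x u (retWord x u m) < firstIdx x u (retWord x u n)) :
    derivedSeq x u m < derivedSeq x u n := by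
  classical
  unfold derivedSeq
  have hss : (Finset.range (firstIdx x u (retWord x u m))).image (retWord x u) ⊂
      (Finset.range (firstIdx x u (retWord x u n))).image (retWord x u) := by
    refine (Finset.ssubset_iff_of_subset
      (Finset.image_subset_image (Finset.range_mono h.le))).mpr ⟨retWord x u m, ?_, ?_⟩
    · exact Finset.mem_image.mpr ⟨_, Finset.mem_range.mpr h, retWord_firstIdx m⟩
    · intro hmem
      obtain ⟨k, hk, hk'⟩ := Finset.mem_image.mp hmem
      exact Nat.notMem_of_lt_sInf (Finset.mem_range.mp hk) hk'
  convert Finset.card_lt_card hss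

lemma retWord_eq_of_derivedSeq_eq {m n : ℕ} (h : derivedSeq x u m = derivedSeq x u n) :
    retWord x u m = retWord x u n := by
  rcases lt_trichotomy (firstIdx x u (retWord x u m)) (firstIdx x u (retWord x u n)) with
    h' | h' | h'
  · exact absurd h (derivedSeq_lt h').ne
  · rw [← retWord_firstIdx m, h', retWord_firstIdx]
  · exact absurd h (derivedSeq_lt h').ne'

lemma thetaLetter_derivedSeq (n : ℕ) :
    thetaLetter x u (derivedSeq x u n) = retWord x u n :=
  retWord_eq_of_derivedSeq_eq
    (Nat.sInf_mem (s := {m | derivedSeq x u m = derivedSeq x u n}) ⟨n, rfl⟩)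

lemma thetaLetter_injOn : Set.InjOn (thetaLetter x u) (derivedAlphabet x u) := by
  rintro _ ⟨m, rfl⟩ _ ⟨n, rfl⟩ h
  rw [thetaLetter_derivedSeq, thetaLetter_derivedSeq] at h
  simp only [derivedSeq, h]

end Enumeration

/-! ### Return words form a code -/

/-- The intrinsic property of a return word `r` to `u`: it is nonempty, `u` is a prefix
of `r ++ u`, and `u` occurs in `r ++ u` at no position strictly between `0` and `r.length`. -/
structure IsReturnTo (u r : List A) : Prop where
  ne_nil : r ≠ []
  isPrefix : u <+: r ++ u
  not_prefix_drop : ∀ k, 0 < k → k < r.length → ¬ u <+: (r ++ u).drop k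

lemma isReturnTo_retWord {x : ℕ → A} {u : List A} (hrec : UniformlyRecurrent x)
    (hpu : IsPrefixSeq x u) (n : ℕ) : IsReturnTo u (retWord x u n) := by
  obtain ⟨hlt, hi, hj, hno⟩ := successiveOccs_occSeq hrec hpu n
  set i := occSeq x u n with hidef
  set j := occSeq x u (n + 1) with hjdef
  have hr : retWord x u n = factorAt x i (j - i) := rfl
  have hru : retWord x u n ++ u = factorAt x i (j - i + u.length) := by
    rw [factorAt_add, Nat.add_sub_cancel' hlt.le, hj, hr]
  refine ⟨fun h => ?_, ?_, fun k hk hk' hpre => ?_⟩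
  · have := congrArg List.length h
    rw [hr, length_factorAt, List.length_nil] at this
    omega
  · rw [hru]
    exact (occursAt_iff_prefix x u i _ (by omega)).mp hi
  · rw [hr, length_factorAt] at hk'
    have hsplit : j - i + u.length = k + (j - i - k + u.length) := by omega
    rw [hru, hsplit, factorAt_add, List.drop_left' (length_factorAt x i k)] at hpre
    exact hno (i + k) (by omega) (by omega)
      ((occursAt_iff_prefix x u (i + k) _ (by omega)).mpr hpre)

lemma prefix_flatten_append {u : List A} {L : List (List A)} (hL : ∀ r ∈ L, IsReturnTo u r) :
    u <+: L.flatten ++ u := by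
  induction L with
  | nil => simp
  | cons r L ih =>
    have h1 := ih fun s hs => hL s (List.mem_cons_of_mem _ hs)
    rw [List.flatten_cons, List.append_assoc]
    exact (hL r List.mem_cons_self).isPrefix.trans ((List.prefix_append_right_inj r).mpr h1)

/-- If the first factor `r'` were longer than the first factor `r`, then `u` would occur
in `r' ++ u` at position `r.length`. -/
lemma length_le_of_flatten_eq {u r r' : List A} {L L' : List (List A)}
    (hr : IsReturnTo u r) (hL : ∀ s ∈ L, IsReturnTo u s)
    (hr' : IsReturnTo u r') (hL' : ∀ s ∈ L', IsReturnTo u s)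
    (h : r ++ L.flatten = r' ++ L'.flatten) : r'.length ≤ r.length := by
  by_contra! hlt
  refine hr'.not_prefix_drop r.length (List.length_pos_iff.mpr hr.ne_nil) hlt ?_
  have hW : (r' ++ u).drop r.length <+: L.flatten ++ u := by
    have h1 : r' ++ u <+: r ++ (L.flatten ++ u) := by
      rw [← List.append_assoc, h, List.append_assoc]
      exact (List.prefix_append_right_inj r').mpr (prefix_flatten_append hL')
    simpa using h1.drop r.length
  refine List.prefix_of_prefix_length_le (prefix_flatten_append hL) hW ?_
  simp only [List.length_drop, List.length_append]
  omega

lemma flatten_injective {u : List A} {L L' : List (List A)}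
    (hL : ∀ s ∈ L, IsReturnTo u s) (hL' : ∀ s ∈ L', IsReturnTo u s)
    (h : L.flatten = L'.flatten) : L = L' := by
  induction L generalizing L' with
  | nil =>
    cases L' with
    | nil => rfl
    | cons r' L' =>
      have := (hL' r' List.mem_cons_self).ne_nil
      simp_all
  | cons r L ih =>
    cases L' with
    | nil =>
      have := (hL r List.mem_cons_self).ne_nil
      simp_all
    | cons r' L' =>
      rw [List.flatten_cons, List.flatten_cons] at h
      rw [List.forall_mem_cons] at hL hL'
      have hlen : r.length = r'.length :=
        le_antisymm (length_le_of_flatten_eq hL'.1 hL'.2 hL.1 hL.2 h.symm)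
          (length_le_of_flatten_eq hL.1 hL.2 hL'.1 hL'.2 h)
      obtain ⟨rfl, h2⟩ := List.append_inj h hlen
      rw [ih hL.2 hL'.2 h2]

lemma map_inj_of_injOn {f : A → B} {s : Set A} (hf : s.InjOn f) {l l' : List A}
    (hl : ∀ c ∈ l, c ∈ s) (hl' : ∀ c ∈ l', c ∈ s) (h : l.map f = l'.map f) : l = l' := by
  induction l generalizing l' with
  | nil => simpa using h.symm
  | cons a l ih =>
    cases l' with
    | nil => simp at h
    | cons a' l' =>
      rw [List.forall_mem_cons] at hl hl'
      rw [List.map_cons, List.map_cons, List.cons_eq_cons] at h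
      rw [hf hl.1 hl'.1 h.1, ih hl.2 hl'.2 h.2]

lemma theta_injOn {x : ℕ → A} {u : List A} (hrec : UniformlyRecurrent x)
    (hpu : IsPrefixSeq x u) {l l' : List ℕ} (hl : ∀ c ∈ l, c ∈ derivedAlphabet x u)
    (hl' : ∀ c ∈ l', c ∈ derivedAlphabet x u) (h : theta x u l = theta x u l') : l = l' := by
  have hret : ∀ m : List ℕ, (∀ c ∈ m, c ∈ derivedAlphabet x u) →
      ∀ s ∈ m.map (thetaLetter x u), IsReturnTo u s := by
    intro m hm s hs
    obtain ⟨c, hc, rfl⟩ := List.mem_map.mp hs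
    obtain ⟨n, rfl⟩ := hm c hc
    rw [thetaLetter_derivedSeq]
    exact isReturnTo_retWord hrec hpu n
  have hmap := flatten_injective (hret l hl) (hret l' hl') h
  exact map_inj_of_injOn thetaLetter_injOn hl hl' hmap

/-! ### The connecting morphism -/

/-- A return word to `v` decomposes into return words to any prefix `u` of `v`. -/
lemma exists_theta_eq {x : ℕ → A} {u v : List A} (hrec : UniformlyRecurrent x)
    (hpu : IsPrefixSeq x u) (hpv : IsPrefixSeq x v) (huv : u <+: v) (n : ℕ) :
    ∃ l : List ℕ, (∀ c ∈ l, c ∈ derivedAlphabet x u) ∧ theta x u l = retWord x v n := by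
  obtain ⟨hlt, hi, hj, -⟩ := successiveOccs_occSeq hrec hpv n
  obtain ⟨p, hp⟩ := exists_occSeq_eq hrec hpu (hi.of_prefix huv)
  obtain ⟨q, hq⟩ := exists_occSeq_eq hrec hpu (hj.of_prefix huv)
  have hpq : p < q := by
    rw [← (occSeq_strictMono hrec hpu).lt_iff_lt, hp, hq]
    exact hlt
  obtain ⟨t, rfl⟩ := Nat.exists_eq_add_of_le hpq.le
  refine ⟨(List.range t).map fun s => derivedSeq x u (p + s), ?_, ?_⟩
  · intro c hc
    obtain ⟨s, -, rfl⟩ := List.mem_map.mp hc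
    exact ⟨p + s, rfl⟩
  · have h := factorAt_occSeq hrec hpu p t
    rw [hp, hq] at h
    rw [retWord, h, theta, apply, List.map_map]
    congr 1
    exact List.map_congr_left fun s _ => thetaLetter_derivedSeq (p + s)


/-- For a uniformly recurrent sequence `x` and nonempty prefixes `u`, `v`
of `x` with `u` a prefix of `v`, there is a unique morphism
`Θ : R_{x,v}* → R_{x,u}*` satisfying `Θ_{x,u} ∘ Θ = Θ_{x,v}`. -/
theorem unique_connecting_morphism {A : Type*} (x : ℕ → A) (u v : List A)
    (hrec : UniformlyRecurrent x) (hu : u ≠ []) (hv : v ≠ [])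
    (hpu : IsPrefixSeq x u) (hpv : IsPrefixSeq x v) (huv : u <+: v) :
    ∃ g : ℕ → List ℕ,
      (∀ k ∈ derivedAlphabet x v, ∀ c ∈ g k, c ∈ derivedAlphabet x u) ∧
      (∀ k ∈ derivedAlphabet x v, theta x u (g k) = thetaLetter x v k) ∧
      ∀ g' : ℕ → List ℕ,
        (∀ k ∈ derivedAlphabet x v, ∀ c ∈ g' k, c ∈ derivedAlphabet x u) →
        (∀ k ∈ derivedAlphabet x v, theta x u (g' k) = thetaLetter x v k) →
        ∀ k ∈ derivedAlphabet x v, g' k = g k := by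
  have hex : ∀ k, ∃ l : List ℕ, k ∈ derivedAlphabet x v →
      (∀ c ∈ l, c ∈ derivedAlphabet x u) ∧ theta x u l = thetaLetter x v k := by
    intro k
    by_cases hk : k ∈ derivedAlphabet x v
    · obtain ⟨n, rfl⟩ := hk
      obtain ⟨l, h1, h2⟩ := exists_theta_eq hrec hpu hpv huv n
      exact ⟨l, fun _ => ⟨h1, by rw [h2, thetaLetter_derivedSeq]⟩⟩
    · exact ⟨[], fun h => absurd h hk⟩
  choose g hg using hex
  refine ⟨g, fun k hk => (hg k hk).1, fun k hk => (hg k hk).2, fun g' h1 h2 k hk => ?_⟩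
  exact theta_injOn hrec hpu (h1 k hk) (hg k hk).1 ((h2 k hk).trans (hg k hk).2.symm)
end Rauzy
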